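/- arXiv:1907.09405 — 4 statements merged into one kernel-verified Lean document; each statement's English description precedes it below -/
import Mathlib

section
/- Fix a color i ∈ [q], a constant η with 0 < η ≤ 1, and set γ_a = η/(20α_i). Then with high probability there do not exist sets S ⊆ A and T ⊆ B with γ_a·log n ≤ |S| ≤ γ_a·n/log n and |T| ≤ α_i·η·|S|·log n for which e_i(S,T) > 2·α_i·η·|S|·log n. -/
open MeasureTheory Filter Finset Asymptotics

/-- Discrete measurable structure on edge states: `none` = non-edge, `some i` = edge of color `cᵢ`. -/
instance (q : ℕ) : MeasurableSpace (Option (Fin q)) := ⊤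

/-- Distribution of the state of a single pair: non-edge with probability `1-p`,
an edge of color `cᵢ` with probability `αᵢ·p`. -/
noncomputable def colorM (q : ℕ) (α : Fin q → ℝ) (p : ℝ) : Measure (Option (Fin q)) :=
  ENNReal.ofReal (1 - p) • Measure.dirac none +
    ∑ i : Fin q, ENNReal.ofReal (α i * p) • Measure.dirac (some i)

/-- The randomly colored random bipartite graph on parts `A = B = Fin n`:
independently, each pair `(a,b)` is a non-edge with probability `1-p` and an
edge of color `cᵢ` with probability `αᵢ·p`.  A sample is a function
`f : Fin n × Fin n → Option (Fin q)`. -/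
noncomputable def graphM (n q : ℕ) (α : Fin q → ℝ) (p : ℝ) :
    Measure (Fin n × Fin n → Option (Fin q)) :=
  Measure.pi fun _ => colorM q α p

lemma colorM_prob (q : ℕ) (α : Fin q → ℝ) (hα : ∀ i, 0 < α i) (hsum : ∑ i, α i = 1)
    (p : ℝ) (hp : 0 ≤ p) (hp1 : p ≤ 1) : IsProbabilityMeasure (colorM q α p) := by
  constructor
  simp only [colorM, Measure.coe_add, Pi.add_apply, Measure.coe_smul, Pi.smul_apply, measure_univ,
    Measure.coe_finsetSum, Finset.sum_apply, smul_eq_mul, mul_one]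
  rw [← ENNReal.ofReal_sum_of_nonneg (fun i _ => mul_nonneg (hα i).le hp), ← Finset.sum_mul, hsum,
    one_mul, ← ENNReal.ofReal_add (by linarith) hp]
  simp

lemma colorM_single (q : ℕ) (α : Fin q → ℝ) (hα : ∀ i, 0 < α i) 
    (p : ℝ) (hp : 0 ≤ p) (i : Fin q) : (colorM q α p).real {some i} = α i * p := by
  have : (colorM q α p) {some i} = ENNReal.ofReal (α i * p) := by
    simp only [colorM, Measure.coe_add, Pi.add_apply, Measure.coe_smul, Pi.smul_apply,
      Measure.coe_finsetSum, Finset.sum_apply, smul_eq_mul]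
    rw [Finset.sum_eq_single i]
    · simp
    · intro b _ hb
      simp [hb]
    · simp
  rw [Measure.real, this, ENNReal.toReal_ofReal (mul_nonneg (hα i).le hp)]

lemma colorM_integral (q : ℕ) (α : Fin q → ℝ) (hα : ∀ i, 0 < α i) (hsum : ∑ i, α i = 1)
    (p : ℝ) (hp : 0 ≤ p) (hp1 : p ≤ 1) (i : Fin q) (l : ℝ) :
    ∫ x, (if x = some i then l else 1) ∂(colorM q α p) = 1 + (l - 1) * (α i * p) := by
  have := colorM_prob q α hα hsum p hp hp1
  have h : (fun x : Option (Fin q) => if x = some i then l else 1) =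
      fun x => 1 + Set.indicator {some i} (fun _ => l - 1) x := by
    ext x
    by_cases hx : x = some i <;> simp [hx]
  rw [h, integral_add (Integrable.of_finite) (Integrable.of_finite),
    integral_indicator_const _ (MeasurableSet.of_discrete), colorM_single q α hα p hp]
  simp [mul_comm]

lemma chernoff (n q : ℕ) (α : Fin q → ℝ) (hα : ∀ i, 0 < α i) (hsum : ∑ i, α i = 1)
    (p : ℝ) (hp : 0 ≤ p) (hp1 : p ≤ 1) (i : Fin q) (l : ℝ) (hl : 1 ≤ l) (m : ℝ)
    (U : Finset (Fin n × Fin n)) :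
    (graphM n q α p).real {f | m < ((U.filter fun e => f e = some i).card : ℝ)} ≤
      l ^ (-m) * Real.exp (l * (α i * p) * U.card) := by
  have := colorM_prob q α hα hsum p hp hp1
  have hP : IsProbabilityMeasure (graphM n q α p) := by unfold graphM; infer_instance
  have hl0 : 0 < l := by linarith
  set g : (Fin n × Fin n) → Option (Fin q) → ℝ :=
    fun e x => if e ∈ U then (if x = some i then l else 1) else 1 with hg
  have hprod : ∀ f : Fin n × Fin n → Option (Fin q),
      ∏ e, g e (f e) = l ^ ((U.filter fun e => f e = some i).card : ℝ) := by
    intro f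
    rw [Real.rpow_natCast, hg]
    simp only
    rw [Finset.prod_ite_mem]
    simp [Finset.prod_ite]
  have hint : ∫ f, ∏ e, g e (f e) ∂(graphM n q α p) = (1 + (l - 1) * (α i * p)) ^ U.card := by
    unfold graphM
    rw [integral_fintype_prod_eq_prod (𝕜 := ℝ) (f := g)]
    have : ∀ e, ∫ x, g e x ∂(colorM q α p) = if e ∈ U then (1 + (l - 1) * (α i * p)) else 1 := by
      intro e
      by_cases he : e ∈ U
      · simp only [hg, he, if_true]
        exact colorM_integral q α hα hsum p hp hp1 i l
      · simp [hg, he]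
    simp only [this]
    rw [Finset.prod_ite_mem]
    simp
  have hap : 0 ≤ α i * p := mul_nonneg (hα i).le hp
  have hmk := mul_meas_ge_le_integral_of_nonneg (μ := graphM n q α p)
    (f := fun f => ∏ e, g e (f e))
    (Filter.Eventually.of_forall fun f => by
      show 0 ≤ ∏ e, g e (f e)
      rw [hprod]; positivity) Integrable.of_finite (l ^ m)
  have hsub : (graphM n q α p).real {f | m < ((U.filter fun e => f e = some i).card : ℝ)} ≤
      (graphM n q α p).real {f | l ^ m ≤ ∏ e, g e (f e)} := by
    apply measureReal_mono
    · intro f hf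
      simp only [Set.mem_ofPred_eq] at hf ⊢
      rw [hprod]
      exact Real.rpow_le_rpow_of_exponent_le hl hf.le
    · finiteness
  rw [hint] at hmk
  have h1 : (1 + (l - 1) * (α i * p)) ^ U.card ≤ Real.exp (l * (α i * p) * U.card) := by
    rw [mul_comm _ (U.card : ℝ), Real.exp_nat_mul]
    have h0 : 0 ≤ (l - 1) * (α i * p) := mul_nonneg (by linarith) hap
    have h2 := Real.add_one_le_exp (l * (α i * p))
    exact pow_le_pow_left₀ (by linarith) (by nlinarith) _
  have hlm : 0 < l ^ m := by positivity
  rw [Real.rpow_neg hl0.le, ← div_eq_inv_mul, le_div_iff₀ hlm]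
  calc _ ≤ _ := mul_le_mul_of_nonneg_right hsub hlm.le
    _ ≤ _ := by rw [mul_comm]; exact hmk
    _ ≤ _ := h1

lemma count_small (n : ℕ) (t : ℝ) (ht : 0 < t) (htn : t ≤ n) :
    (((Finset.univ : Finset (Finset (Fin n))).filter fun T => (T.card : ℝ) ≤ t).card : ℝ) ≤
      Real.exp t * (n / t) ^ t := by
  have hn : (0:ℝ) < n := by linarith
  set y : ℝ := t / n with hy
  have hy0 : 0 < y := by positivity
  have hy1 : y ≤ 1 := by rw [hy, div_le_one hn]; exact htn
  have h1 : ∑ T : Finset (Fin n), y ^ T.card = (1 + y) ^ n := by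
    have := Finset.prod_one_add (f := fun _ : Fin n => y) Finset.univ
    simpa using this.symm
  have h2 : (((Finset.univ : Finset (Finset (Fin n))).filter fun T => (T.card : ℝ) ≤ t).card : ℝ)
      * y ^ t ≤ (1 + y) ^ n := by
    rw [← h1, ← nsmul_eq_mul]
    refine (Finset.card_nsmul_le_sum _ (fun T => y ^ T.card) _ ?_).trans
      (Finset.sum_le_sum_of_subset_of_nonneg (Finset.filter_subset _ _) fun _ _ _ => by positivity)
    intro T hT
    rw [← Real.rpow_natCast]
    exact Real.rpow_le_rpow_of_exponent_ge hy0 hy1 (Finset.mem_filter.1 hT).2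
  have h3 : (1 + y) ^ n ≤ Real.exp t := by
    have : t = n * y := by rw [hy]; field_simp
    rw [this, Real.exp_nat_mul]
    gcongr
    linarith [Real.add_one_le_exp y]
  have h4 : ((n:ℝ) / t) ^ t = (y ^ t)⁻¹ := by
    rw [← Real.inv_rpow hy0.le, hy, inv_div]
  rw [h4, ← div_eq_mul_inv, le_div_iff₀ (by positivity)]
  exact h2.trans h3

lemma per_S (n q : ℕ) (α : Fin q → ℝ) (hα : ∀ i, 0 < α i) (hsum : ∑ i, α i = 1)
    (p : ℝ) (hp : 0 < p) (hp1 : p ≤ 1) (i : Fin q) (t : ℝ) (ht : 0 < t) (htn : t ≤ n)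
    (S : Finset (Fin n)) (hS : 0 < S.card) (hsp : S.card * (α i * p) ≤ 2) :
    (graphM n q α p).real {f | ∃ T : Finset (Fin n), (T.card : ℝ) ≤ t ∧
      2 * t < (((S ×ˢ T).filter fun e => f e = some i).card : ℝ)} ≤
      (Real.exp 3 * (n / t) * (S.card * (α i * p) / 2) ^ 2) ^ t := by
  have := colorM_prob q α hα hsum p hp.le hp1
  have hP : IsProbabilityMeasure (graphM n q α p) := by unfold graphM; infer_instance
  have hn : (0:ℝ) < n := by linarith
  have hs : (0:ℝ) < S.card := by exact_mod_cast hS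
  have hap : 0 < α i * p := mul_pos (hα i) hp
  set v : ℝ := S.card * (α i * p) / 2 with hv
  have hv0 : 0 < v := by positivity
  have hv1 : 1 ≤ v⁻¹ := (one_le_inv₀ hv0).2 (by linarith)
  set F := (Finset.univ : Finset (Finset (Fin n))).filter fun T => (T.card : ℝ) ≤ t with hF
  have hsub : {f : Fin n × Fin n → Option (Fin q) | ∃ T : Finset (Fin n), (T.card : ℝ) ≤ t ∧
      2 * t < (((S ×ˢ T).filter fun e => f e = some i).card : ℝ)} ⊆
      ⋃ T ∈ F, {f | 2 * t < (((S ×ˢ T).filter fun e => f e = some i).card : ℝ)} := by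
    rintro f ⟨T, h1, h2⟩
    simp only [Set.mem_iUnion]
    exact ⟨T, by simp [hF, h1], h2⟩
  have hone : ∀ T ∈ F, (graphM n q α p).real
      {f | 2 * t < (((S ×ˢ T).filter fun e => f e = some i).card : ℝ)} ≤
      v ^ (2 * t) * Real.exp (2 * t) := by
    intro T hT
    refine (chernoff n q α hα hsum p hp.le hp1 i v⁻¹ hv1 (2 * t) (S ×ˢ T)).trans ?_
    rw [Real.inv_rpow hv0.le, Real.rpow_neg hv0.le, inv_inv]
    refine mul_le_mul_of_nonneg_left (Real.exp_le_exp.2 ?_) (by positivity)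
    have hTt : (T.card : ℝ) ≤ t := (Finset.mem_filter.1 hT).2
    have : v⁻¹ * (α i * p) * ((S ×ˢ T).card : ℝ) = 2 * T.card := by
      rw [hv, Finset.card_product]; push_cast
      have := (hα i).ne'
      field_simp
    rw [this]; linarith
  calc _ ≤ (graphM n q α p).real (⋃ T ∈ F, {f | 2 * t < (((S ×ˢ T).filter fun e => f e = some i).card : ℝ)}) :=
        measureReal_mono hsub (measure_ne_top _ _)
    _ ≤ ∑ T ∈ F, _ := measureReal_biUnion_finset_le _ _
    _ ≤ ∑ T ∈ F, v ^ (2 * t) * Real.exp (2 * t) := Finset.sum_le_sum hone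
    _ = F.card * (v ^ (2 * t) * Real.exp (2 * t)) := by simp
    _ ≤ (Real.exp t * (n / t) ^ t) * (v ^ (2 * t) * Real.exp (2 * t)) := by
        gcongr
        exact count_small n t ht htn
    _ = _ := by
        rw [Real.mul_rpow (by positivity) (by positivity), Real.mul_rpow (by positivity) (by positivity),
          ← Real.exp_mul, Real.rpow_mul hv0.le, show 3 * t = t + 2 * t by ring, Real.exp_add]
        norm_num
        ring

lemma per_S' (n : ℕ) (a η L p s : ℝ) (ha : 0 < a) (hη : 0 < η) (hL : 0 < L) (hn : (0:ℝ) < n)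
    (hs : 0 < s) (hp : 0 < p) (hpL : p ≤ 3 / 2 * L / n) (hsn : s ≤ η / (20 * a) * n / L)
    (hu : 1 ≤ a * η * L) :
    (Real.exp 3 * (n / (a * η * s * L)) * (s * (a * p) / 2) ^ 2) ^ (a * η * s * L) ≤
      (12 * (a * L / η) * (3 / 5 : ℝ) ^ (a * η * L - 1) * (s / n)) ^ s := by
  have he : Real.exp 3 ≤ 21 := by
    have := Real.exp_one_lt_d9
    have h3 : Real.exp 3 = Real.exp 1 ^ 3 := by rw [← Real.exp_nat_mul]; norm_num
    rw [h3]
    calc Real.exp 1 ^ 3 ≤ (2.72:ℝ) ^ 3 := by gcongr; linarith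
      _ ≤ 21 := by norm_num
  set x : ℝ := a * s * L / (η * n) with hx
  have hx0 : 0 < x := by positivity
  have hx1 : x ≤ 1 / 20 := by
    rw [hx, div_le_iff₀ (by positivity)]
    rw [le_div_iff₀ hL] at hsn
    calc a * s * L = a * (s * L) := by ring
      _ ≤ a * (η / (20 * a) * n) := by gcongr
      _ = _ := by field_simp
  have hB : Real.exp 3 * (n / (a * η * s * L)) * (s * (a * p) / 2) ^ 2 ≤ 12 * x := by
    calc _ ≤ 21 * (n / (a * η * s * L)) * (s * (a * (3 / 2 * L / n)) / 2) ^ 2 := by gcongr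
      _ = 21 * (9 / 16) * x := by rw [hx]; field_simp; ring
      _ ≤ 12 * x := by gcongr; norm_num
  have hassoc : a * η * s * L = (a * η * L) * s := by ring
  calc _ ≤ (12 * x) ^ (a * η * s * L) := by gcongr
    _ = ((12 * x) ^ (a * η * L)) ^ s := by rw [hassoc, Real.rpow_mul (by positivity)]
    _ ≤ _ := by
      gcongr
      have h1 : (12 * x) ^ (a * η * L) = (12 * x) ^ (a * η * L - 1) * (12 * x) := by
        rw [← Real.rpow_add_one (by positivity)]; ring_nf
      rw [h1]
      calc _ ≤ (3 / 5 : ℝ) ^ (a * η * L - 1) * (12 * x) := by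
            gcongr
            linarith
        _ = _ := by rw [hx]; field_simp

lemma sum_S (n : ℕ) (hn : 0 < n) (R : ℝ) (hR : 0 ≤ R) (hR1 : Real.exp 1 * R ≤ 1 / 2) :
    ∑ S ∈ (Finset.univ : Finset (Finset (Fin n))).filter (fun S => 0 < S.card),
      (R * ((S.card : ℝ) / n)) ^ (S.card : ℝ) ≤ 2 * (Real.exp 1 * R) := by
  have hn' : (0:ℝ) < n := by exact_mod_cast hn
  have h1 : ∑ S ∈ (Finset.univ : Finset (Finset (Fin n))).filter (fun S => 0 < S.card),
      (R * ((S.card : ℝ) / n)) ^ (S.card : ℝ) =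
      ∑ s ∈ Finset.range (n + 1), n.choose s • (if 0 < s then (R * ((s : ℝ) / n)) ^ s else 0) := by
    rw [Finset.sum_filter]
    have := Finset.sum_powerset_apply_card (fun s : ℕ => if 0 < s then (R * ((s : ℝ) / n)) ^ s else 0)
      (x := (Finset.univ : Finset (Fin n)))
    simpa using this
  rw [h1, Finset.sum_range_succ']
  simp only [lt_self_iff_false, if_false, smul_zero, add_zero, Nat.succ_pos, if_true, nsmul_eq_mul]
  calc _ ≤ ∑ k ∈ Finset.range n, (Real.exp 1 * R) * (1 / 2 : ℝ) ^ k := by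
        apply Finset.sum_le_sum
        intro k _
        have hc : (n.choose (k + 1) : ℝ) ≤ (n:ℝ) ^ (k + 1) / (k + 1).factorial := Nat.choose_le_pow_div _ _
        have hf : ((k + 1 : ℕ) : ℝ) ^ (k + 1) / (k + 1).factorial ≤ Real.exp ((k + 1 : ℕ) : ℝ) :=
          Real.pow_div_factorial_le_exp _ (by positivity) _
        calc (n.choose (k + 1) : ℝ) * (R * (((k + 1 : ℕ) : ℝ) / n)) ^ (k + 1)
            ≤ (n:ℝ) ^ (k + 1) / (k + 1).factorial * (R * (((k + 1 : ℕ) : ℝ) / n)) ^ (k + 1) := by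
              gcongr
          _ = ((k + 1 : ℕ) : ℝ) ^ (k + 1) / (k + 1).factorial * R ^ (k + 1) := by
              rw [mul_pow, div_pow]; field_simp
          _ ≤ Real.exp ((k + 1 : ℕ) : ℝ) * R ^ (k + 1) := by gcongr
          _ = (Real.exp 1 * R) ^ (k + 1) := by
              rw [mul_pow, ← Real.exp_nat_mul, mul_one]
          _ = (Real.exp 1 * R) * (Real.exp 1 * R) ^ k := by ring
          _ ≤ _ := by gcongr
    _ = (Real.exp 1 * R) * ∑ k ∈ Finset.range n, (1 / 2 : ℝ) ^ k := by rw [Finset.mul_sum]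
    _ ≤ (Real.exp 1 * R) * 2 := by
        gcongr
        exact sum_geometric_two_le n
    _ = _ := by ring

lemma R_tendsto (a η : ℝ) (ha : 0 < a) (hη : 0 < η) :
    Tendsto (fun n : ℕ => 12 * (a * Real.log n / η) * (3 / 5 : ℝ) ^ (a * η * Real.log n - 1))
      atTop (nhds 0) := by
  set b : ℝ := Real.log (5 / 3) with hb
  have hb0 : 0 < b := Real.log_pos (by norm_num)
  have hlog : Tendsto (fun n : ℕ => Real.log n) atTop atTop :=
    Real.tendsto_log_atTop.comp tendsto_natCast_atTop_atTop
  have hy : Tendsto (fun n : ℕ => b * a * η * Real.log n) atTop atTop :=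
    hlog.const_mul_atTop (by positivity)
  have h := ((Real.tendsto_pow_mul_exp_neg_atTop_nhds_zero 1).comp hy).const_mul
    (12 / (b * η ^ 2) * (5 / 3))
  rw [mul_zero] at h
  refine h.congr fun n => ?_
  have h35 : Real.log (3 / 5) = -b := by
    rw [hb, ← Real.log_inv]; norm_num
  rw [Real.rpow_sub_one (by norm_num), Real.rpow_def_of_pos (by norm_num : (0:ℝ) < 3 / 5), h35]
  simp only [Function.comp, pow_one]
  rw [show -b * (a * η * Real.log n) = -(b * a * η * Real.log n) by ring]
  field_simp

lemma bad_bound (n q : ℕ) (α : Fin q → ℝ) (hα : ∀ i, 0 < α i) (hsum : ∑ i, α i = 1)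
    (p : ℝ) (hp : 0 < p) (hp1 : p ≤ 1) (i : Fin q) (η L : ℝ) (hη : 0 < η) (hη1 : η ≤ 1)
    (hL : 0 < L) (hn : 0 < n) (hpL : p ≤ 3 / 2 * L / n) (hu : 1 ≤ α i * η * L)
    (hR1 : Real.exp 1 * (12 * (α i * L / η) * (3 / 5 : ℝ) ^ (α i * η * L - 1)) ≤ 1 / 2) :
    (graphM n q α p).real
        {f | ∃ S T : Finset (Fin n),
          η / (20 * α i) * L ≤ (S.card : ℝ) ∧
          (S.card : ℝ) ≤ η / (20 * α i) * n / L ∧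
          (T.card : ℝ) ≤ α i * η * S.card * L ∧
          2 * (α i * η * S.card * L) <
            (((S ×ˢ T).filter fun e => f e = some i).card : ℝ)} ≤
      2 * (Real.exp 1 * (12 * (α i * L / η) * (3 / 5 : ℝ) ^ (α i * η * L - 1))) := by
  have := colorM_prob q α hα hsum p hp.le hp1
  have hP : IsProbabilityMeasure (graphM n q α p) := by unfold graphM; infer_instance
  have hn' : (0:ℝ) < n := by exact_mod_cast hn
  have ha := hα i
  set R := 12 * (α i * L / η) * (3 / 5 : ℝ) ^ (α i * η * L - 1) with hR
  have hR0 : 0 ≤ R := by positivity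
  set F := (Finset.univ : Finset (Finset (Fin n))).filter (fun S => 0 < S.card) with hF
  set G := F.filter (fun S => (S.card : ℝ) ≤ η / (20 * α i) * n / L) with hG
  set E : Finset (Fin n) → Set (Fin n × Fin n → Option (Fin q)) := fun S =>
    {f | ∃ T : Finset (Fin n), (T.card : ℝ) ≤ α i * η * S.card * L ∧
      2 * (α i * η * S.card * L) < (((S ×ˢ T).filter fun e => f e = some i).card : ℝ)} with hE
  calc _ ≤ (graphM n q α p).real (⋃ S ∈ G, E S) := by
        refine measureReal_mono ?_ (measure_ne_top _ _)
        rintro f ⟨S, T, h1, h2, h3, h4⟩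
        simp only [Set.mem_iUnion]
        have hS : 0 < S.card := by
          have : (0:ℝ) < S.card := lt_of_lt_of_le (by positivity) h1
          exact_mod_cast this
        exact ⟨S, by simp only [hG, hF, Finset.mem_filter, Finset.mem_univ, true_and]; exact ⟨hS, h2⟩,
          T, h3, h4⟩
    _ ≤ ∑ S ∈ G, (graphM n q α p).real (E S) := measureReal_biUnion_finset_le _ _
    _ ≤ ∑ S ∈ G, (R * ((S.card : ℝ) / n)) ^ (S.card : ℝ) := by
        apply Finset.sum_le_sum
        intro S hS
        obtain ⟨hS1, hS2⟩ := Finset.mem_filter.1 hS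
        have hS0 : 0 < S.card := (Finset.mem_filter.1 hS1).2
        have hs : (0:ℝ) < S.card := by exact_mod_cast hS0
        have hsL : S.card * L * (20 * α i) ≤ η * n := by
          have h := hS2
          rw [le_div_iff₀ hL, div_mul_eq_mul_div, le_div_iff₀ (by positivity)] at h
          exact h
        refine (per_S n q α hα hsum p hp hp1 i (α i * η * S.card * L) (by positivity) ?_ S hS0 ?_).trans
          (per_S' n (α i) η L p S.card ha hη hL hn' hs hp hpL hS2 hu)
        · have h1 : η * (η * n) ≤ n := by
            have : η * η ≤ 1 := by nlinarith
            nlinarith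
          have h2 : η * (S.card * L * (20 * α i)) ≤ η * (η * n) := by gcongr
          have h3 : 0 ≤ α i * η * S.card * L := by positivity
          nlinarith
        · have h1 : S.card * (α i * p) ≤ S.card * (α i * (3 / 2 * L / n)) := by gcongr
          have h2 : S.card * (α i * (3 / 2 * L / n)) = 3 / 40 * (S.card * L * (20 * α i) / n) := by
            field_simp; ring
          have h3 : S.card * L * (20 * α i) / n ≤ η := (div_le_iff₀ hn').2 hsL
          linarith
    _ ≤ ∑ S ∈ F, (R * ((S.card : ℝ) / n)) ^ (S.card : ℝ) :=
        Finset.sum_le_sum_of_subset_of_nonneg (Finset.filter_subset _ _) fun _ _ _ => by positivity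
    _ ≤ _ := sum_S n hn R hR0 hR1

/-- Lemma 2(a): with `γ_a = η/(20 αᵢ)`, w.h.p. there are no sets `S ⊆ A`, `T ⊆ B`
with `γ_a log n ≤ |S| ≤ γ_a n/log n` and `|T| ≤ αᵢ η |S| log n` carrying more than
`2 αᵢ η |S| log n` edges of color `cᵢ`. -/
theorem lemma_a (q : ℕ) (hq : 1 ≤ q) (α : Fin q → ℝ)
    (hα : ∀ i, 0 < α i) (hsum : ∑ i, α i = 1)
    (i : Fin q) (η : ℝ) (hη : 0 < η) (hη1 : η ≤ 1)
    (w : ℕ → ℝ) (hw : Tendsto w atTop atTop)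
    (hwo : w =o[atTop] fun n => Real.log n) :
    Tendsto (fun n =>
      graphM n q α ((Real.log n + w n) / n)
        {f | ¬ ∃ S T : Finset (Fin n),
          η / (20 * α i) * Real.log n ≤ (S.card : ℝ) ∧
          (S.card : ℝ) ≤ η / (20 * α i) * n / Real.log n ∧
          (T.card : ℝ) ≤ α i * η * S.card * Real.log n ∧
          2 * (α i * η * S.card * Real.log n) <
            (((S ×ˢ T).filter fun e => f e = some i).card : ℝ)})
      atTop (nhds 1) := by
  have ha := hα i
  have hR := R_tendsto (α i) η ha hη
  have hRe := hR.const_mul (Real.exp 1)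
  rw [mul_zero] at hRe
  have hlog : Tendsto (fun n : ℕ => Real.log n) atTop atTop :=
    Real.tendsto_log_atTop.comp tendsto_natCast_atTop_atTop
  have hln : ∀ᶠ n : ℕ in atTop, ‖Real.log (n : ℝ)‖ ≤ 1 / 2 * ‖(n : ℝ)‖ :=
    tendsto_natCast_atTop_atTop.eventually
      (Real.isLittleO_log_id_atTop.bound (by norm_num : (0:ℝ) < 1 / 2))
  have hev : ∀ᶠ n : ℕ in atTop, 0 < (Real.log n + w n) / n ∧ (Real.log n + w n) / n ≤ 1 ∧
      0 < Real.log n ∧ 0 < n ∧ (Real.log n + w n) / n ≤ 3 / 2 * Real.log n / n ∧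
      1 ≤ α i * η * Real.log n ∧
      Real.exp 1 * (12 * (α i * Real.log n / η) * (3 / 5 : ℝ) ^ (α i * η * Real.log n - 1)) ≤ 1 / 2 := by
    filter_upwards [hln, hlog.eventually_gt_atTop 0, eventually_gt_atTop 0,
      hw.eventually_ge_atTop 0, hwo.bound (by norm_num : (0:ℝ) < 1 / 2),
      hlog.eventually_ge_atTop (1 / (α i * η)),
      hRe.eventually_le_const (by norm_num : (0:ℝ) < 1 / 2)] with n h1 h2 h3 h4 h5 h6 h7
    have hn' : (0:ℝ) < n := by exact_mod_cast h3
    rw [Real.norm_of_nonneg h2.le, Real.norm_of_nonneg hn'.le] at h1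
    rw [Real.norm_of_nonneg h2.le, Real.norm_of_nonneg h4] at h5
    refine ⟨by positivity, ?_, h2, h3, ?_, ?_, h7⟩
    · rw [div_le_one hn']; linarith
    · gcongr; linarith
    · rwa [div_le_iff₀' (by positivity)] at h6
  have hlow : Tendsto (fun n : ℕ => ENNReal.ofReal (1 - 2 * (Real.exp 1 *
      (12 * (α i * Real.log n / η) * (3 / 5 : ℝ) ^ (α i * η * Real.log n - 1)))))
      atTop (nhds 1) := by
    have h := ENNReal.tendsto_ofReal ((hRe.const_mul 2).const_sub 1)
    simpa using h
  refine tendsto_of_tendsto_of_tendsto_of_le_of_le' hlow tendsto_const_nhds ?_ ?_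
  · filter_upwards [hev] with n hn
    obtain ⟨hp, hp1, hL, hn0, hpL, hu, hR1⟩ := hn
    have := colorM_prob q α hα hsum _ hp.le hp1
    have hP : IsProbabilityMeasure (graphM n q α ((Real.log n + w n) / n)) := by
      unfold graphM; infer_instance
    have hb := bad_bound n q α hα hsum _ hp hp1 i η (Real.log n) hη hη1 hL hn0 hpL hu hR1
    have hc := probReal_compl_eq_one_sub (μ := graphM n q α ((Real.log n + w n) / n))
      (s := {f | ∃ S T : Finset (Fin n),
          η / (20 * α i) * Real.log n ≤ (S.card : ℝ) ∧
          (S.card : ℝ) ≤ η / (20 * α i) * n / Real.log n ∧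
          (T.card : ℝ) ≤ α i * η * S.card * Real.log n ∧
          2 * (α i * η * S.card * Real.log n) <
            (((S ×ˢ T).filter fun e => f e = some i).card : ℝ)}) (Set.toFinite _).measurableSet
    refine ENNReal.ofReal_le_of_le_toReal ?_
    change _ ≤ (graphM n q α ((Real.log n + w n) / n)).real _
    refine le_trans ?_ hc.ge
    linarith
  · filter_upwards [hev] with n hn
    have := colorM_prob q α hα hsum _ hn.1.le hn.2.1
    have hP : IsProbabilityMeasure (graphM n q α ((Real.log n + w n) / n)) := by
      unfold graphM; infer_instance
    exact prob_le_one
end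

section
/- Let β ∈ (0,1) and α ∈ (0,1] be constants and set γ_b = 10·log(e/β)/α. Then the sequence a_n = C(n, ⌊βn⌋)² · C(⌊βn⌋, ⌈γ_b·n/log n⌉) · exp(−(α·β·γ_b/4)·n) tends to 0 as n → ∞, where C(a,b) denotes the binomial coefficient. -/
open Filter

/-- Chernoff-type bound on binomial coefficients. -/
lemma choose_le_exp_aux (n k : ℕ) (x : ℝ) (hx : 0 < x) :
    (n.choose k : ℝ) ≤ Real.exp (n * x + k * (-Real.log x)) := by
  have h1 : (n.choose k : ℝ) * x ^ k ≤ (x + 1) ^ n := by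
    rcases le_or_gt k n with hk | hk
    · rw [add_pow]
      have := Finset.single_le_sum (f := fun m => x ^ m * 1 ^ (n - m) * (n.choose m : ℝ))
        (s := Finset.range (n + 1)) (fun i _ => by positivity)
        (Finset.mem_range.2 (Nat.lt_succ_of_le hk))
      simp only [one_pow, mul_one] at this ⊢
      linarith
    · rw [Nat.choose_eq_zero_of_lt hk]
      simp only [Nat.cast_zero, zero_mul]
      positivity
  have h2 : (x + 1) ^ n ≤ Real.exp (n * x) := by
    rw [Real.exp_nat_mul]
    exact pow_le_pow_left₀ (by positivity) (Real.add_one_le_exp x) n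
  have h3 : Real.exp (k * (-Real.log x)) = (x ^ k)⁻¹ := by
    rw [Real.exp_nat_mul, Real.exp_neg, Real.exp_log hx, inv_pow]
  rw [Real.exp_add, h3, ← div_eq_mul_inv, le_div_iff₀ (by positivity)]
  exact h1.trans h2

/-- with `γ_b = 10 log(e/β)/α`, the union-bound estimate of Lemma 2(b),
`C(n,⌊βn⌋)² · C(⌊βn⌋,⌈γ_b n/log n⌉) · exp(−(αβγ_b/4) n)`, tends to `0`. -/
theorem lemma_b_estimate (β α γb : ℝ) (hβ : 0 < β) (hβ1 : β < 1)
    (hα : 0 < α) (hα1 : α ≤ 1) (hγb : γb = 10 * Real.log (Real.exp 1 / β) / α) :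
    Tendsto (fun n : ℕ =>
      ((n.choose ⌊β * n⌋₊ : ℝ)) ^ 2 * ((⌊β * n⌋₊).choose ⌈γb * n / Real.log n⌉₊ : ℝ) *
        Real.exp (-(α * β * γb / 4) * n))
      atTop (nhds 0) := by
  have hL : Real.log (Real.exp 1 / β) = 1 - Real.log β := by
    rw [Real.log_div (Real.exp_pos 1).ne' hβ.ne', Real.log_exp]
  have hlogβ : Real.log β < 0 := Real.log_neg hβ hβ1
  rw [hL] at hγb
  have hγ : 0 < γb := by rw [hγb]; apply div_pos _ hα; linarith
  have hαγ : α * β * γb / 4 = 5 / 2 * β * (1 - Real.log β) := by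
    rw [hγb]; field_simp; ring
  have hnat : Tendsto (fun n : ℕ => (n : ℝ)) atTop atTop := tendsto_natCast_atTop_atTop
  have hsmall : Tendsto (fun n : ℕ => (-Real.log (1/4)) * (γb / Real.log n + 1 / (n : ℝ)))
      atTop (nhds 0) := by
    have h1 : Tendsto (fun n : ℕ => γb / Real.log n) atTop (nhds 0) :=
      (Real.tendsto_log_atTop.comp hnat).const_div_atTop γb
    have h2 : Tendsto (fun n : ℕ => 1 / (n : ℝ)) atTop (nhds 0) := hnat.const_div_atTop 1
    simpa using (h1.add h2).const_mul (-Real.log (1/4))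
  have hev := hsmall.eventually (gt_mem_nhds (show (0:ℝ) < β / 8 by positivity))
  have hbound : Tendsto (fun n : ℕ => Real.exp (-(β / 8 * n))) atTop (nhds 0) :=
    Real.tendsto_exp_neg_atTop_nhds_zero.comp (hnat.const_mul_atTop (by positivity))
  refine squeeze_zero' (Eventually.of_forall fun n => by positivity) ?_ hbound
  filter_upwards [hev, eventually_ge_atTop 2] with n hn hn2
  have hn0 : (0:ℝ) < n := by positivity
  have hn1 : (1:ℝ) < n := by exact_mod_cast hn2
  have hlogn : 0 < Real.log n := Real.log_pos hn1
  have hm : (⌊β * n⌋₊ : ℝ) ≤ β * n := Nat.floor_le (by positivity)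
  have hk : (⌈γb * n / Real.log n⌉₊ : ℝ) < γb * n / Real.log n + 1 :=
    Nat.ceil_lt_add_one (by positivity)
  have hb1 := choose_le_exp_aux n ⌊β * n⌋₊ β hβ
  have hb2 := choose_le_exp_aux ⌊β * n⌋₊ ⌈γb * n / Real.log n⌉₊ (1/4) (by norm_num)
  have hl4 : 0 < -Real.log (1/4) := by
    have := Real.log_neg (show (0:ℝ) < 1/4 by norm_num) (by norm_num)
    linarith
  generalize -Real.log (1/4) = c at *
  generalize ⌊β * (n:ℝ)⌋₊ = m at *
  generalize hkk : ⌈γb * (n:ℝ) / Real.log n⌉₊ = k at *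
  have hkc : (k:ℝ) * c ≤ β / 8 * n := by
    have e : (γb * n / Real.log n + 1) * c = c * (γb / Real.log n + 1 / (n : ℝ)) * n := by
      field_simp
    have h1 := mul_le_mul_of_nonneg_right hk.le hl4.le
    have h2 := mul_le_mul_of_nonneg_right hn.le hn0.le
    linarith
  calc _ ≤ Real.exp (n * β + m * (-Real.log β)) ^ 2 * Real.exp (m * (1/4) + k * c) *
        Real.exp (-(α * β * γb / 4) * n) := by gcongr
    _ = Real.exp (2 * (n * β + m * (-Real.log β)) + (m * (1/4) + k * c)
          + (-(α * β * γb / 4) * n)) := by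
        rw [sq, ← Real.exp_add, ← Real.exp_add, ← Real.exp_add, two_mul]
    _ ≤ _ := by
        apply Real.exp_le_exp.2
        rw [hαγ]
        have h1 := mul_le_mul_of_nonneg_right hm (show 0 ≤ -Real.log β by linarith)
        have h2 : 0 ≤ β * n * (-Real.log β) :=
          mul_nonneg (by positivity) (by linarith)
        nlinarith
end

section
/- Let β ∈ (0,1) and α ∈ (0,1] be constants, set γ_b = 10·log(e/β)/α, and for each n ≥ 3 let k_n = ⌈10·log n/log log n⌉ and p_n = (log n + ω(n))/n where ω(n) → ∞ and ω(n) = o(log n). Then the sequence a_n = C(n, ⌊βn⌋)² · C(⌊βn⌋, ⌈n/log n⌉) · C(⌊βn⌋, ⌈γ_b·n/log n⌉) · [ C(⌈γ_b·n/log n⌉, k_n) · (α·p_n)^{k_n} ]^{⌈n/log n⌉} tends to 0 as n → ∞. -/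
open Filter

theorem aux_inner (s K : ℕ) (q A ℓ : ℝ) (hq : 0 ≤ q) (hK : 0 < K) (hsq : (s : ℝ) * q ≤ A)
    (hA : A * Real.exp 1 / K ≤ Real.exp (-ℓ / 2)) :
    (s.choose K : ℝ) * q ^ K ≤ Real.exp (-ℓ / 2 * K) := by
  have h1 : (s.choose K : ℝ) ≤ (s : ℝ) ^ K / (K.factorial : ℝ) := Nat.choose_le_pow_div K s
  have h2 : (K : ℝ) ^ K / (K.factorial : ℝ) ≤ Real.exp K :=
    Real.pow_div_factorial_le_exp (K : ℝ) (by positivity) K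
  have hK' : (0 : ℝ) < K := by exact_mod_cast hK
  have hf : (0 : ℝ) < K.factorial := by exact_mod_cast K.factorial_pos
  have hA0 : 0 ≤ A := le_trans (by positivity) hsq
  calc (s.choose K : ℝ) * q ^ K ≤ (s : ℝ) ^ K / (K.factorial : ℝ) * q ^ K := by gcongr
    _ = ((s : ℝ) * q / K) ^ K * ((K : ℝ) ^ K / (K.factorial : ℝ)) := by
        rw [div_pow, mul_pow]; field_simp
    _ ≤ (A / K) ^ K * Real.exp K := by gcongr
    _ = (A * Real.exp 1 / K) ^ K := by
        rw [div_pow, div_pow, mul_pow, ← Real.exp_nat_mul, mul_one]; ring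
    _ ≤ (Real.exp (-ℓ / 2)) ^ K := by gcongr
    _ = Real.exp (-ℓ / 2 * K) := by rw [← Real.exp_nat_mul, mul_comm]

/-- with `γ_b = 10 log(e/β)/α`, `k_n = ⌈10 log n/log log n⌉` and
`p_n = (log n + ω(n))/n`, the union-bound estimate of Lemma 2(c),
`C(n,⌊βn⌋)² · C(⌊βn⌋,⌈n/log n⌉) · C(⌊βn⌋,⌈γ_b n/log n⌉) ·
  (C(⌈γ_b n/log n⌉, k_n) · (α p_n)^{k_n})^{⌈n/log n⌉}`, tends to `0`. -/
theorem lemma_c_estimate (β α γb : ℝ) (hβ : 0 < β) (hβ1 : β < 1)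
    (hα : 0 < α) (hα1 : α ≤ 1) (hγb : γb = 10 * Real.log (Real.exp 1 / β) / α)
    (w : ℕ → ℝ) (hw : Tendsto w atTop atTop)
    (hwo : w =o[atTop] fun n => Real.log n)
    (p : ℕ → ℝ) (hp : ∀ n : ℕ, p n = (Real.log n + w n) / n)
    (k : ℕ → ℕ) (hk : ∀ n : ℕ, k n = ⌈10 * Real.log n / Real.log (Real.log n)⌉₊) :
    Tendsto (fun n : ℕ =>
      ((n.choose ⌊β * n⌋₊ : ℝ)) ^ 2 * ((⌊β * n⌋₊).choose ⌈(n : ℝ) / Real.log n⌉₊ : ℝ) *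
        ((⌊β * n⌋₊).choose ⌈γb * n / Real.log n⌉₊ : ℝ) *
        (((⌈γb * n / Real.log n⌉₊).choose (k n) : ℝ) * (α * p n) ^ (k n)) ^
          ⌈(n : ℝ) / Real.log n⌉₊)
      atTop (nhds 0) := by
  have hγ : 0 < γb := by
    rw [hγb, Real.log_div (Real.exp_pos 1).ne' hβ.ne', Real.log_exp]
    have := Real.log_neg hβ hβ1
    apply div_pos _ hα
    linarith
  have hcast : Tendsto (fun n : ℕ => (n : ℝ)) atTop atTop := tendsto_natCast_atTop_atTop
  have hL : Tendsto (fun n : ℕ => Real.log (n : ℝ)) atTop atTop :=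
    Real.tendsto_log_atTop.comp hcast
  have hl : Tendsto (fun n : ℕ => Real.log (Real.log (n : ℝ))) atTop atTop :=
    Real.tendsto_log_atTop.comp hL
  have e1 : ∀ᶠ n : ℕ in atTop, Real.log (n : ℝ) ≤ γb * n := by
    have h := (Real.isLittleO_log_id_atTop.comp_tendsto hcast).bound hγ
    filter_upwards [h, hL.eventually_ge_atTop 0] with n hn h0
    simpa [abs_of_nonneg h0] using hn
  have e2 : ∀ᶠ n : ℕ in atTop, w n ≤ Real.log (n : ℝ) := by
    filter_upwards [hwo.bound one_pos, hL.eventually_ge_atTop 0] with n hn h0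
    rw [one_mul, Real.norm_of_nonneg h0] at hn
    exact (le_abs_self _).trans hn
  have e3 : ∀ᶠ n : ℕ in atTop, (4 * γb * α) * Real.exp 1 * Real.log (Real.log (n : ℝ))
      ≤ 10 * Real.exp (Real.log (Real.log (n : ℝ)) / 2) := by
    have h := (isLittleO_pow_exp_pos_mul_atTop (b := 1 / 2) 1 (by norm_num)).comp_tendsto hl
    have hc : 0 < 10 / ((4 * γb * α) * Real.exp 1) := by positivity
    filter_upwards [h.bound hc, hl.eventually_ge_atTop 0] with n hn h0
    simp only [Function.comp, pow_one, Real.norm_of_nonneg h0,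
      Real.norm_of_nonneg (Real.exp_pos _).le] at hn
    rw [div_mul_eq_mul_div, le_div_iff₀ (by positivity)] at hn
    rw [show Real.log (Real.log (n : ℝ)) / 2 = 1 / 2 * Real.log (Real.log (n : ℝ)) by ring]
    linarith
  have hr : Tendsto (fun n : ℕ => (16 * Real.exp (-5)) ^ n) atTop (nhds 0) := by
    apply tendsto_pow_atTop_nhds_zero_of_lt_one (by positivity)
    have h5 : (16 : ℝ) < Real.exp 5 := by
      have h1 : (2 : ℝ) < Real.exp 1 := by have := Real.exp_one_gt_d9; linarith
      have h2 : Real.exp 5 = Real.exp 1 ^ 5 := by rw [← Real.exp_nat_mul]; norm_num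
      rw [h2]
      calc (16 : ℝ) < 2 ^ 5 := by norm_num
        _ ≤ Real.exp 1 ^ 5 := by gcongr
    rw [Real.exp_neg, ← div_eq_mul_inv, div_lt_one (Real.exp_pos 5)]
    exact h5
  have key : ∀ᶠ n : ℕ in atTop, 0 ≤ p n ∧
      (((⌈γb * n / Real.log n⌉₊).choose (k n) : ℝ) * (α * p n) ^ (k n)) ^
          ⌈(n : ℝ) / Real.log n⌉₊ ≤ Real.exp (-5) ^ n := by
    filter_upwards [e1, e2, e3, hL.eventually_gt_atTop 0, hl.eventually_gt_atTop 0,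
      hw.eventually_ge_atTop 0, eventually_gt_atTop 0] with n h1 h2 h3 h4 h5 h6 h7
    have hn : (0 : ℝ) < n := by exact_mod_cast h7
    have hKge : 10 * Real.log n / Real.log (Real.log n) ≤ (k n : ℝ) := by
      rw [hk]; exact Nat.le_ceil _
    have hmge : (n : ℝ) / Real.log n ≤ (⌈(n : ℝ) / Real.log n⌉₊ : ℝ) := Nat.le_ceil _
    have hK0 : (0 : ℝ) < k n := lt_of_lt_of_le (by positivity) hKge
    have hp0 : 0 ≤ p n := by rw [hp]; positivity
    refine ⟨hp0, ?_⟩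
    have hp2 : p n ≤ 2 * Real.log n / n := by rw [hp]; gcongr; linarith
    have hs : (⌈γb * n / Real.log n⌉₊ : ℝ) ≤ 2 * γb * n / Real.log n := by
      have ha := (Nat.ceil_lt_add_one (a := γb * n / Real.log n) (by positivity)).le
      have hb : 1 ≤ γb * n / Real.log n := by rw [le_div_iff₀ h4]; linarith
      have hc : 2 * γb * n / Real.log n = γb * n / Real.log n + γb * n / Real.log n := by ring
      linarith
    have hin := aux_inner ⌈γb * n / Real.log n⌉₊ (k n) (α * p n) (4 * γb * α)
      (Real.log (Real.log n)) (by positivity) (by exact_mod_cast hK0)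
      (by
        calc (⌈γb * n / Real.log n⌉₊ : ℝ) * (α * p n)
            ≤ (2 * γb * n / Real.log n) * (α * (2 * Real.log n / n)) := by gcongr
          _ = 4 * γb * α := by field_simp; ring)
      (by
        rw [div_le_iff₀ hK0]
        have hE : Real.exp (-Real.log (Real.log n) / 2) * Real.log n
            = Real.exp (Real.log (Real.log n) / 2) := by
          nth_rewrite 2 [← Real.exp_log h4]
          rw [← Real.exp_add]; congr 1; ring
        calc 4 * γb * α * Real.exp 1
            ≤ 10 * Real.exp (Real.log (Real.log n) / 2) / Real.log (Real.log n) := by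
              rw [le_div_iff₀ h5]; exact h3
          _ = Real.exp (-Real.log (Real.log n) / 2) *
                (10 * Real.log n / Real.log (Real.log n)) := by rw [← hE]; ring
          _ ≤ _ := by gcongr)
    have hin2 : Real.exp (-Real.log (Real.log n) / 2 * (k n)) ≤ Real.exp (-5 * Real.log n) := by
      apply Real.exp_le_exp.mpr
      rw [div_le_iff₀ h5] at hKge
      linarith
    calc _ ≤ (Real.exp (-5 * Real.log n)) ^ ⌈(n : ℝ) / Real.log n⌉₊ := by
            apply pow_le_pow_left₀ (by positivity)
            exact hin.trans hin2
      _ ≤ Real.exp (-5) ^ n := by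
            rw [← Real.exp_nat_mul, ← Real.exp_nat_mul]
            apply Real.exp_le_exp.mpr
            rw [div_le_iff₀ h4] at hmge
            linarith
  refine squeeze_zero' ?_ ?_ hr
  · filter_upwards [key] with n hn
    have := hn.1
    positivity
  · filter_upwards [key] with n hn
    have hp0 := hn.1
    have hfl : ⌊β * n⌋₊ ≤ n := by
      apply Nat.floor_le_of_le
      have : (0 : ℝ) ≤ n := by positivity
      nlinarith
    have c1 : ∀ r : ℕ, (n.choose r : ℝ) ≤ 2 ^ n := fun r => by
      exact_mod_cast Nat.choose_le_two_pow n r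
    have c2 : ∀ r : ℕ, ((⌊β * n⌋₊).choose r : ℝ) ≤ 2 ^ n := fun r => by
      refine le_trans ?_ (c1 r)
      exact_mod_cast Nat.choose_le_choose r hfl
    calc _ ≤ ((2 : ℝ) ^ n) ^ 2 * 2 ^ n * 2 ^ n * Real.exp (-5) ^ n := by
            gcongr
            · exact c1 _
            · exact c2 _
            · exact c2 _
            · exact hn.2
      _ = (16 * Real.exp (-5)) ^ n := by
            rw [mul_pow, show (16 : ℝ) = 2 * 2 * 2 * 2 by norm_num]
            simp only [mul_pow]; ring
end

section
/- Let γ, δ > 0 be constants and for each n ≥ 3 let p_n = (log n + ω(n))/n where ω(n) → ∞ and ω(n) = o(log n). Then the sequence a_n = C(n, ⌈γ·n/log n⌉)² · C(⌈γ·n/log n⌉², ⌈δ·n/log log n⌉) · p_n^{⌈δ·n/log log n⌉} tends to 0 as n → ∞. -/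
open Filter

lemma choose_le_exp_aux_s14 (N k : ℕ) (hk : 0 < k) :
    (N.choose k : ℝ) ≤ (Real.exp 1 * N / k) ^ k := by
  have h1 : (N.choose k : ℝ) ≤ (N : ℝ) ^ k / (k.factorial : ℝ) := Nat.choose_le_pow_div k N
  have h2 : (k : ℝ) ^ k / (k.factorial : ℝ) ≤ Real.exp k :=
    Real.pow_div_factorial_le_exp (k : ℝ) (by positivity) k
  have hkp : (0 : ℝ) < (k : ℝ) ^ k := by positivity
  have h3 : (Real.exp 1) ^ k = Real.exp k := by
    rw [← Real.exp_nat_mul]; simp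
  refine h1.trans ?_
  rw [div_pow, mul_pow, h3, le_div_iff₀ hkp]
  calc (N : ℝ) ^ k / (k.factorial : ℝ) * (k : ℝ) ^ k
      = ((k : ℝ) ^ k / (k.factorial : ℝ)) * (N : ℝ) ^ k := by ring
    _ ≤ _ := by gcongr

lemma lin_le_exp_aux (c a : ℝ) (ha : 0 < a) :
    ∀ᶠ x : ℝ in atTop, c * x ≤ Real.exp (a * x) := by
  have h := (isLittleO_pow_exp_pos_mul_atTop 1 ha).bound
    (c := 1 / (|c| + 1)) (by positivity)
  filter_upwards [h, eventually_ge_atTop 0] with x hx h0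
  rw [pow_one, Real.norm_eq_abs, Real.norm_eq_abs, abs_of_nonneg h0,
    abs_of_pos (Real.exp_pos _), div_mul_eq_mul_div, one_mul, le_div_iff₀ (by positivity)] at hx
  nlinarith [mul_le_mul_of_nonneg_right (le_abs_self c) h0]

/-- for constants `γ, δ > 0` and `p_n = (log n + ω(n))/n`, the union-bound
estimate of Lemma 2(e),
`C(n,⌈γn/log n⌉)² · C(⌈γn/log n⌉², ⌈δn/log log n⌉) · p_n^{⌈δn/log log n⌉}`, tends to `0`. -/
theorem lemma_e_estimate (γ δ : ℝ) (hγ : 0 < γ) (hδ : 0 < δ)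
    (w : ℕ → ℝ) (hw : Tendsto w atTop atTop)
    (hwo : w =o[atTop] fun n => Real.log n)
    (p : ℕ → ℝ) (hp : ∀ n : ℕ, p n = (Real.log n + w n) / n) :
    Tendsto (fun n : ℕ =>
      ((n.choose ⌈γ * n / Real.log n⌉₊ : ℝ)) ^ 2 *
        (((⌈γ * n / Real.log n⌉₊ ^ 2).choose ⌈δ * n / Real.log (Real.log n)⌉₊ : ℝ)) *
        p n ^ ⌈δ * n / Real.log (Real.log n)⌉₊)
      atTop (nhds 0) := by
  have hn : Tendsto (fun n : ℕ => (n : ℝ)) atTop atTop := tendsto_natCast_atTop_atTop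
  have hL : Tendsto (fun n : ℕ => Real.log n) atTop atTop := Real.tendsto_log_atTop.comp hn
  have hl : Tendsto (fun n : ℕ => Real.log (Real.log n)) atTop atTop :=
    Real.tendsto_log_atTop.comp hL
  have hlim : Tendsto (fun n : ℕ => Real.exp (-(δ / 4 * n))) atTop (nhds 0) :=
    Real.tendsto_exp_neg_atTop_nhds_zero.comp (hn.const_mul_atTop (by positivity))
  have key : ∀ᶠ n : ℕ in atTop,
      0 ≤ p n ∧ ((n.choose ⌈γ * n / Real.log n⌉₊ : ℝ)) ^ 2 *
        (((⌈γ * n / Real.log n⌉₊ ^ 2).choose ⌈δ * n / Real.log (Real.log n)⌉₊ : ℝ)) *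
        p n ^ ⌈δ * n / Real.log (Real.log n)⌉₊ ≤ Real.exp (-(δ / 4 * n)) := by
    filter_upwards [hn.eventually_ge_atTop 1, hL.eventually_ge_atTop 1,
      hl.eventually_ge_atTop 1, hL.eventually_ge_atTop (Real.exp 1 / γ),
      hL.eventually (lin_le_exp_aux (1 / γ) 1 one_pos),
      hw.eventually_ge_atTop 0, hwo.bound one_pos,
      hl.eventually (lin_le_exp_aux (Real.exp 1 * 8 * γ ^ 2 / δ) (1 / 2) (by norm_num)),
      hl.eventually (lin_le_exp_aux (32 * γ / δ) 1 one_pos)] with n h1 h2 h3 h4 h5 h6 h7 h8 h9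
    rw [hp]
    generalize hLd : Real.log n = L at *
    generalize hld : Real.log L = l at *
    have hL0 : 0 < L := by linarith
    have hl0 : 0 < l := by linarith
    have hn0 : (0 : ℝ) < n := by linarith
    have eL : Real.exp l = L := by rw [← hld, Real.exp_log hL0]
    have en : Real.exp L = n := by rw [← hLd, Real.exp_log hn0]
    rw [one_mul, en] at h5
    rw [one_mul, eL] at h9
    rw [Real.norm_eq_abs, Real.norm_eq_abs, abs_of_nonneg h6, abs_of_pos hL0, one_mul] at h7
    have hx0 : 0 < γ * n / L := by positivity
    have hy0 : 0 < δ * n / l := by positivity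
    have hx1 : 1 ≤ γ * n / L := by
      rw [le_div_iff₀ hL0]
      rw [div_mul_eq_mul_div, div_le_iff₀ hγ] at h5
      linarith
    have hk1 := Nat.le_ceil (γ * n / L)
    have hk2 := (Nat.ceil_lt_add_one hx0.le).le
    have hk0 := Nat.ceil_pos.2 hx0
    have hm1 := Nat.le_ceil (δ * n / l)
    have hm0 := Nat.ceil_pos.2 hy0
    generalize ⌈γ * n / L⌉₊ = k at *
    generalize ⌈δ * n / l⌉₊ = m at *
    have hk3 : (k : ℝ) ≤ 2 * (γ * n / L) := by linarith
    have hk0' : (0 : ℝ) < k := by exact_mod_cast hk0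
    have hm0' : (0 : ℝ) < m := by exact_mod_cast hm0
    have hp0 : 0 ≤ (L + w n) / n := by positivity
    have hp1 : (L + w n) / n ≤ 2 * L / n := by gcongr; linarith
    refine ⟨hp0, ?_⟩
    -- first factor
    have hA : (n.choose k : ℝ) ≤ Real.exp (2 * l * k) := by
      refine (choose_le_exp_aux_s14 n k hk0).trans ?_
      have : Real.exp 1 * n / k ≤ Real.exp (2 * l) := by
        have e2 : Real.exp (2 * l) = L * L := by rw [two_mul, Real.exp_add, eL]
        rw [e2]
        calc Real.exp 1 * n / k ≤ Real.exp 1 * n / (γ * n / L) := by gcongr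
          _ = Real.exp 1 / γ * L := by field_simp
          _ ≤ L * L := by gcongr
      calc (Real.exp 1 * n / k) ^ k ≤ (Real.exp (2 * l)) ^ k := by gcongr
        _ = _ := by rw [← Real.exp_nat_mul]; ring_nf
    have hA2 : (n.choose k : ℝ) ^ 2 ≤ Real.exp (δ / 4 * n) := by
      calc (n.choose k : ℝ) ^ 2 ≤ Real.exp (2 * l * k) ^ 2 := by gcongr
        _ = Real.exp (4 * l * k) := by rw [← Real.exp_nat_mul]; push_cast; ring_nf
        _ ≤ _ := by
          apply Real.exp_le_exp.2
          calc 4 * l * k ≤ 4 * l * (2 * (γ * n / L)) := by gcongr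
            _ = (32 * γ / δ * l) * (δ * n / (4 * L)) := by field_simp; ring
            _ ≤ L * (δ * n / (4 * L)) := by gcongr
            _ = _ := by field_simp
    have hB : ((k ^ 2).choose m : ℝ) * ((L + w n) / n) ^ m ≤ Real.exp (-(δ / 2 * n)) := by
      have hb : Real.exp 1 * ((k ^ 2 : ℕ) : ℝ) / m * ((L + w n) / n) ≤ Real.exp (-(l / 2)) := by
        have e3 : Real.exp (-(l / 2)) = Real.exp (1 / 2 * l) / L := by
          rw [← eL, ← Real.exp_sub]; congr 1; ring
        rw [e3]
        push_cast
        calc Real.exp 1 * (k : ℝ) ^ 2 / m * ((L + w n) / n)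
            ≤ Real.exp 1 * (2 * (γ * n / L)) ^ 2 / (δ * n / l) * (2 * L / n) := by gcongr
          _ = (Real.exp 1 * 8 * γ ^ 2 / δ * l) / L := by field_simp; ring
          _ ≤ _ := by gcongr
      calc ((k ^ 2).choose m : ℝ) * ((L + w n) / n) ^ m
          ≤ (Real.exp 1 * ((k ^ 2 : ℕ) : ℝ) / m) ^ m * ((L + w n) / n) ^ m := by
            gcongr
            exact choose_le_exp_aux_s14 _ _ hm0
        _ = (Real.exp 1 * ((k ^ 2 : ℕ) : ℝ) / m * ((L + w n) / n)) ^ m := by rw [mul_pow]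
        _ ≤ (Real.exp (-(l / 2))) ^ m := by gcongr
        _ = Real.exp (m * (-(l / 2))) := by rw [← Real.exp_nat_mul]
        _ ≤ _ := by
          apply Real.exp_le_exp.2
          rw [div_le_iff₀ hl0] at hm1
          linarith
    rw [mul_assoc]
    calc _ ≤ Real.exp (δ / 4 * n) * Real.exp (-(δ / 2 * n)) := by gcongr
      _ = _ := by rw [← Real.exp_add]; congr 1; ring
  refine squeeze_zero' ?_ ?_ hlim
  · filter_upwards [key] with n h
    have := h.1
    positivity
  · filter_upwards [key] with n h using h.2
end
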